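/- arXiv:1811.04429 — 2 statements merged into one kernel-verified Lean document; each statement's English description precedes it below -/
import Mathlib

section
/- Let G be a finite simple chordal graph and let B be an induced complete bipartite subgraph of G with parts B_X = {x} and B_Y = {y_1,...,y_k}. Then for all 1 ≤ i < j ≤ k, the sets M_2(y_i) and M_2(y_j) are disjoint and nonadjacent. -/
open SimpleGraph

/-- `N₁(S)`: the set of vertices at distance exactly 1 from the vertex set `S`. -/
def nOne {V : Type*} (G : SimpleGraph V) (S : Set V) : Set V :=
  {v | v ∉ S ∧ ∃ s ∈ S, G.Adj v s}

/-- `N₂(S)`: the set of vertices at distance exactly 2 from the vertex set `S`. -/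
def nTwo {V : Type*} (G : SimpleGraph V) (S : Set V) : Set V :=
  {v | v ∉ S ∧ (∀ s ∈ S, ¬ G.Adj v s) ∧ ∃ u, G.Adj v u ∧ ∃ s ∈ S, G.Adj u s}

/-- A graph is chordal if every induced cycle is a triangle, i.e. it has no
induced cycle of length at least 4. -/
def IsChordal {V : Type*} (G : SimpleGraph V) : Prop :=
  ∀ n : ℕ, 4 ≤ n → ∀ s : Set V, IsEmpty (G.induce s ≃g cycleGraph n)

/-- A set of vertices is independent if its elements are pairwise nonadjacent. -/
def IsIndepSet {V : Type*} (G : SimpleGraph V) (S : Set V) : Prop :=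
  S.Pairwise fun a b => ¬ G.Adj a b

/-- `B` is an induced complete bipartite subgraph of `G` with parts `B_X = {x}` and
`B_Y = Y`: `Y` is a nonempty independent set not containing `x`, and `x` is adjacent
to every vertex of `Y`. -/
def IsInducedStar {V : Type*} (G : SimpleGraph V) (x : V) (Y : Set V) : Prop :=
  Y.Nonempty ∧ x ∉ Y ∧ (∀ y ∈ Y, G.Adj x y) ∧ ∀ y₁ ∈ Y, ∀ y₂ ∈ Y, ¬ G.Adj y₁ y₂

/-- `M₁(y) = N₁(y) ∩ N₂(B_X)` where `B_X = {x}`. -/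
def M1y {V : Type*} (G : SimpleGraph V) (x : V) (y : V) : Set V :=
  nOne G {y} ∩ nTwo G {x}

/-- `M₂(y) = N₁(M₁(y)) ∩ N₂(B_Y)` where `B_Y = Y`. -/
def M2y {V : Type*} (G : SimpleGraph V) (x : V) (Y : Set V) (y : V) : Set V :=
  nOne G (M1y G x y) ∩ nTwo G Y

theorem no_cyc {V : Type*} (G : SimpleGraph V) (hG : IsChordal G) (n : ℕ) (hn : 4 ≤ n)
    (f : Fin n → V)
    (hf : ∀ i j : Fin n, i < j → f i ≠ f j ∧
      (G.Adj (f i) (f j) ↔ (j.val = i.val + 1 ∨ (i.val = 0 ∧ j.val + 1 = n)))) : False := by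
  have inj : Function.Injective f := by
    intro i j h
    rcases lt_trichotomy i j with h1 | h1 | h1
    · exact absurd h (hf i j h1).1
    · exact h1
    · exact absurd h.symm (hf j i h1).1
  have key : ∀ i j : Fin n, i < j →
      ((cycleGraph n).Adj i j ↔ (j.val = i.val + 1 ∨ (i.val = 0 ∧ j.val + 1 = n))) := by
    intro i j h
    rw [cycleGraph_adj']
    have h' : i.val < j.val := h
    have e1 : (j - i).val = j.val - i.val := Fin.sub_val_of_le h.le
    have e2 : (i - j).val = n + i.val - j.val := Fin.coe_sub_iff_lt.2 h
    rw [e1, e2]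
    have := j.isLt
    omega
  have adj : ∀ i j : Fin n, G.Adj (f i) (f j) ↔ (cycleGraph n).Adj i j := by
    intro i j
    rcases lt_trichotomy i j with h1 | h1 | h1
    · rw [key i j h1, (hf i j h1).2]
    · subst h1; simp
    · rw [G.adj_comm, (cycleGraph n).adj_comm, key j i h1, (hf j i h1).2]
  refine (hG n hn (Set.range f)).false (RelIso.symm ⟨Equiv.ofInjective f inj, ?_⟩)
  intro i j
  exact adj i j

theorem no_c4 {V : Type*} (G : SimpleGraph V) (hG : IsChordal G) (a b c d : V)
    (h1 : G.Adj a b) (h2 : G.Adj b c) (h3 : G.Adj c d) (h4 : G.Adj a d)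
    (n1 : ¬ G.Adj a c) (n2 : ¬ G.Adj b d) (e1 : a ≠ c) (e2 : b ≠ d) : False := by
  refine no_cyc G hG 4 (by norm_num) ![a, b, c, d] ?_
  have := h1.ne; have := h2.ne; have := h3.ne; have := h4.ne
  intro i j hij
  fin_cases i <;> fin_cases j <;> simp at hij <;> simp [*]

theorem no_c5 {V : Type*} (G : SimpleGraph V) (hG : IsChordal G) (a b c d e : V)
   (h0 : G.Adj a b) (h1 : G.Adj a e) (h2 : G.Adj b c) (h3 : G.Adj c d) (h4 : G.Adj d e)
   (n0 : ¬ G.Adj a c) (n1 : ¬ G.Adj a d) (n2 : ¬ G.Adj b d) (n3 : ¬ G.Adj b e) (n4 : ¬ G.Adj c e) : False := by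
  refine no_cyc G hG 5 (by norm_num) ![a, b, c, d, e] ?_
  have m0 := h0.ne
  have m1 := h1.ne
  have m2 := h2.ne
  have m3 := h3.ne
  have m4 := h4.ne
  have e0 : a ≠ c := by
    rintro rfl
    simp_all [G.adj_comm]
  have e1 : a ≠ d := by
    rintro rfl
    simp_all [G.adj_comm]
  have e2 : b ≠ d := by
    rintro rfl
    simp_all [G.adj_comm]
  have e3 : b ≠ e := by
    rintro rfl
    simp_all [G.adj_comm]
  have e4 : c ≠ e := by
    rintro rfl
    simp_all [G.adj_comm]
  intro i j hij
  fin_cases i <;> fin_cases j <;> simp at hij <;> simp [*]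

theorem no_c6 {V : Type*} (G : SimpleGraph V) (hG : IsChordal G) (a b c d e f : V)
   (h0 : G.Adj a b) (h1 : G.Adj a f) (h2 : G.Adj b c) (h3 : G.Adj c d) (h4 : G.Adj d e) (h5 : G.Adj e f)
   (n0 : ¬ G.Adj a c) (n1 : ¬ G.Adj a d) (n2 : ¬ G.Adj a e) (n3 : ¬ G.Adj b d) (n4 : ¬ G.Adj b e) (n5 : ¬ G.Adj b f) (n6 : ¬ G.Adj c e) (n7 : ¬ G.Adj c f) (n8 : ¬ G.Adj d f) : False := by
  refine no_cyc G hG 6 (by norm_num) ![a, b, c, d, e, f] ?_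
  have m0 := h0.ne
  have m1 := h1.ne
  have m2 := h2.ne
  have m3 := h3.ne
  have m4 := h4.ne
  have m5 := h5.ne
  have e0 : a ≠ c := by
    rintro rfl
    simp_all [G.adj_comm]
  have e1 : a ≠ d := by
    rintro rfl
    simp_all [G.adj_comm]
  have e2 : a ≠ e := by
    rintro rfl
    simp_all [G.adj_comm]
  have e3 : b ≠ d := by
    rintro rfl
    simp_all [G.adj_comm]
  have e4 : b ≠ e := by
    rintro rfl
    simp_all [G.adj_comm]
  have e5 : b ≠ f := by
    rintro rfl
    simp_all [G.adj_comm]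
  have e6 : c ≠ e := by
    rintro rfl
    simp_all [G.adj_comm]
  have e7 : c ≠ f := by
    rintro rfl
    simp_all [G.adj_comm]
  have e8 : d ≠ f := by
    rintro rfl
    simp_all [G.adj_comm]
  intro i j hij
  fin_cases i <;> fin_cases j <;> simp at hij <;> simp [*]

theorem no_c7 {V : Type*} (G : SimpleGraph V) (hG : IsChordal G) (a b c d e f g : V)
   (h0 : G.Adj a b) (h1 : G.Adj a g) (h2 : G.Adj b c) (h3 : G.Adj c d) (h4 : G.Adj d e) (h5 : G.Adj e f) (h6 : G.Adj f g)
   (n0 : ¬ G.Adj a c) (n1 : ¬ G.Adj a d) (n2 : ¬ G.Adj a e) (n3 : ¬ G.Adj a f) (n4 : ¬ G.Adj b d) (n5 : ¬ G.Adj b e) (n6 : ¬ G.Adj b f) (n7 : ¬ G.Adj b g) (n8 : ¬ G.Adj c e) (n9 : ¬ G.Adj c f) (n10 : ¬ G.Adj c g) (n11 : ¬ G.Adj d f) (n12 : ¬ G.Adj d g) (n13 : ¬ G.Adj e g) : False := by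
  refine no_cyc G hG 7 (by norm_num) ![a, b, c, d, e, f, g] ?_
  have m0 := h0.ne
  have m1 := h1.ne
  have m2 := h2.ne
  have m3 := h3.ne
  have m4 := h4.ne
  have m5 := h5.ne
  have m6 := h6.ne
  have e0 : a ≠ c := by
    rintro rfl
    simp_all [G.adj_comm]
  have e1 : a ≠ d := by
    rintro rfl
    simp_all [G.adj_comm]
  have e2 : a ≠ e := by
    rintro rfl
    simp_all [G.adj_comm]
  have e3 : a ≠ f := by
    rintro rfl
    simp_all [G.adj_comm]
  have e4 : b ≠ d := by
    rintro rfl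
    simp_all [G.adj_comm]
  have e5 : b ≠ e := by
    rintro rfl
    simp_all [G.adj_comm]
  have e6 : b ≠ f := by
    rintro rfl
    simp_all [G.adj_comm]
  have e7 : b ≠ g := by
    rintro rfl
    simp_all [G.adj_comm]
  have e8 : c ≠ e := by
    rintro rfl
    simp_all [G.adj_comm]
  have e9 : c ≠ f := by
    rintro rfl
    simp_all [G.adj_comm]
  have e10 : c ≠ g := by
    rintro rfl
    simp_all [G.adj_comm]
  have e11 : d ≠ f := by
    rintro rfl
    simp_all [G.adj_comm]
  have e12 : d ≠ g := by
    rintro rfl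
    simp_all [G.adj_comm]
  have e13 : e ≠ g := by
    rintro rfl
    simp_all [G.adj_comm]
  intro i j hij
  fin_cases i <;> fin_cases j <;> simp at hij <;> simp [*]

/-- For distinct `yᵢ, yⱼ ∈ B_Y`, the sets `M₂(yᵢ)` and `M₂(yⱼ)` are disjoint
and nonadjacent. -/
theorem stmt4 {V : Type*} (G : SimpleGraph V) (hG : IsChordal G)
    (x : V) (Y : Set V) (hB : IsInducedStar G x Y)
    (yi yj : V) (hyi : yi ∈ Y) (hyj : yj ∈ Y) (hne : yi ≠ yj) :
    Disjoint (M2y G x Y yi) (M2y G x Y yj) ∧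
      ∀ a ∈ M2y G x Y yi, ∀ b ∈ M2y G x Y yj, ¬ G.Adj a b := by
  obtain ⟨-, hxY, hxy, hYY⟩ := hB
  -- basic facts on M1
  have m1 : ∀ y m, m ∈ M1y G x y → G.Adj y m ∧ ¬ G.Adj x m ∧ x ≠ m := by
    rintro y m ⟨⟨_, s, hs, hms⟩, hm1, hm2, _⟩
    rw [Set.mem_singleton_iff] at hs hm1
    subst hs
    exact ⟨hms.symm, fun h => hm2 x rfl h.symm, fun h => hm1 h.symm⟩
  have m1' : ∀ y ∈ Y, ∀ z ∈ Y, y ≠ z → ∀ m ∈ M1y G x y, ¬ G.Adj z m := by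
    intro y hy z hz hyz m hm hzm
    obtain ⟨a1, a2, a3⟩ := m1 y m hm
    exact no_c4 G hG x y m z (hxy y hy) a1 hzm.symm (hxy z hz) a2 (hYY y hy z hz) a3 hyz
  have m11 : ∀ y ∈ Y, ∀ z ∈ Y, y ≠ z → ∀ m ∈ M1y G x y, ∀ l ∈ M1y G x z, ¬ G.Adj m l := by
    intro y hy z hz hyz m hm l hl hml
    obtain ⟨a1, a2, a3⟩ := m1 y m hm
    obtain ⟨b1, b2, b3⟩ := m1 z l hl
    exact no_c5 G hG x y m l z (hxy y hy) (hxy z hz) a1 hml b1.symm a2 b2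
      (m1' z hz y hy hyz.symm l hl) (hYY y hy z hz) (fun h => m1' y hy z hz hyz m hm h.symm)
  have m2 : ∀ y ∈ Y, ∀ a ∈ M2y G x Y y, (∃ m ∈ M1y G x y, G.Adj m a) ∧
      (∀ z ∈ Y, ¬ G.Adj z a) ∧ ¬ G.Adj x a := by
    rintro y hy a ⟨⟨_, m, hm, ham⟩, ha1, ha2, _⟩
    refine ⟨⟨m, hm, ham.symm⟩, fun z hz h => ha2 z hz h.symm, fun h => ?_⟩
    obtain ⟨a1, a2, a3⟩ := m1 y m hm
    exact no_c4 G hG x y m a (hxy y hy) a1 ham.symm h a2 (fun h => ha2 y hy h.symm) a3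
      (fun h => ha1 (h ▸ hy))
  have key : ∀ y ∈ Y, ∀ z ∈ Y, y ≠ z → ∀ m ∈ M1y G x y, ∀ l ∈ M1y G x z, ∀ a,
      (∀ z ∈ Y, ¬ G.Adj z a) → ¬ G.Adj x a → G.Adj m a → G.Adj l a → False := by
    intro y hy z hz hyz m hm l hl a haY hax hma hla
    obtain ⟨a1, a2, a3⟩ := m1 y m hm
    obtain ⟨b1, b2, b3⟩ := m1 z l hl
    exact no_c6 G hG x y m a l z (hxy y hy) (hxy z hz) a1 hma hla.symm b1.symm a2 hax b2
      (haY y hy) (m1' z hz y hy hyz.symm l hl) (hYY y hy z hz) (m11 y hy z hz hyz m hm l hl)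
      (fun h => m1' y hy z hz hyz m hm h.symm) (fun h => haY z hz h.symm)
  constructor
  · rw [Set.disjoint_left]
    intro a ha hb
    obtain ⟨⟨m, hm, hma⟩, haY, hax⟩ := m2 yi hyi a ha
    obtain ⟨⟨l, hl, hla⟩, -, -⟩ := m2 yj hyj a hb
    exact key yi hyi yj hyj hne m hm l hl a haY hax hma hla
  · intro a ha b hb hab
    obtain ⟨⟨m, hm, hma⟩, haY, hax⟩ := m2 yi hyi a ha
    obtain ⟨⟨l, hl, hlb⟩, hbY, hbx⟩ := m2 yj hyj b hb
    obtain ⟨a1, a2, a3⟩ := m1 yi m hm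
    obtain ⟨b1, b2, b3⟩ := m1 yj l hl
    exact no_c7 G hG x yi m a b l yj (hxy yi hyi) (hxy yj hyj) a1 hma hab hlb.symm b1.symm
      a2 hax hbx b2 (haY yi hyi) (hbY yi hyi) (m1' yj hyj yi hyi hne.symm l hl)
      (hYY yi hyi yj hyj)
      (fun h => key yi hyi yj hyj hne m hm l hl b hbY hbx h hlb)
      (m11 yi hyi yj hyj hne m hm l hl)
      (fun h => m1' yi hyi yj hyj hne m hm h.symm)
      (fun h => key yi hyi yj hyj hne m hm l hl a haY hax hma h.symm)
      (fun h => haY yj hyj h.symm) (fun h => hbY yj hyj h.symm)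
end

section
/- Let G be a finite simple chordal graph and let B be an induced complete bipartite subgraph of G with parts B_X = {x} and B_Y = {y_1,...,y_k}. Then for every vertex w ∈ M_2(B), the set f(w) = N_1(w) ∩ M_1(B) induces a clique in G. -/
open SimpleGraph

/-- `M₁(B_X) = N₁(B_X) ∩ N₂(B_Y)` where `B_X = {x}` and `B_Y = Y`. -/
def M1X {V : Type*} (G : SimpleGraph V) (x : V) (Y : Set V) : Set V :=
  nOne G {x} ∩ nTwo G Y

/-- `M₁(B_Y) = N₁(B_Y) ∩ N₂(B_X)`. -/
def M1Y {V : Type*} (G : SimpleGraph V) (x : V) (Y : Set V) : Set V :=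
  nOne G Y ∩ nTwo G {x}

/-- `M₂(B_X) = N₁(M₁(B_X)) ∩ N₂(B_X)`. -/
def M2X {V : Type*} (G : SimpleGraph V) (x : V) (Y : Set V) : Set V :=
  nOne G (M1X G x Y) ∩ nTwo G {x}

/-- `M₂(B_Y) = N₁(M₁(B_Y)) ∩ N₂(B_Y)`. -/
def M2Y {V : Type*} (G : SimpleGraph V) (x : V) (Y : Set V) : Set V :=
  nOne G (M1Y G x Y) ∩ nTwo G Y

/-- `M₁(B) = M₁(B_X) ∪ M₁(B_Y)`. -/
def M1B {V : Type*} (G : SimpleGraph V) (x : V) (Y : Set V) : Set V :=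
  M1X G x Y ∪ M1Y G x Y

/-- `M₂(B) = M₂(B_X) ∪ M₂(B_Y)`. -/
def M2B {V : Type*} (G : SimpleGraph V) (x : V) (Y : Set V) : Set V :=
  M2X G x Y ∪ M2Y G x Y

/-- `f(S) = N₁(S) ∩ M₁(B)`. -/
def fSet {V : Type*} (G : SimpleGraph V) (x : V) (Y : Set V) (S : Set V) : Set V :=
  nOne G S ∩ M1B G x Y

theorem no_cycle {V : Type*} {G : SimpleGraph V} (hG : IsChordal G) (n : ℕ) (hn : 4 ≤ n)
    (f : Fin n → V) (hf : Function.Injective f)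
    (h : ∀ i j, G.Adj (f i) (f j) ↔ (cycleGraph n).Adj i j) : False := by
  refine (hG n hn (Set.range f)).false ?_
  refine RelIso.symm ⟨Equiv.ofInjective f hf, ?_⟩
  intro a b
  exact h a b

theorem no_C4 {V : Type*} {G : SimpleGraph V} (hG : IsChordal G) {a b c d : V}
    (h0 : G.Adj a b) (h1 : G.Adj b c) (h2 : G.Adj c d) (h3 : G.Adj d a)
    (n0 : ¬ G.Adj a c) (n1 : ¬ G.Adj b d) (e0 : a ≠ c) (e1 : b ≠ d) : False := by
  have r0 := h0.ne
  have s0 := h0.symm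
  have r1 := h1.ne
  have s1 := h1.symm
  have r2 := h2.ne
  have s2 := h2.symm
  have r3 := h3.ne
  have s3 := h3.symm
  have m0 : ¬ G.Adj c a := fun h => n0 h.symm
  have m1 : ¬ G.Adj d b := fun h => n1 h.symm
  refine no_cycle hG 4 (by norm_num) ![a, b, c, d] ?_ ?_
  · intro i j hij
    fin_cases i <;> fin_cases j <;> first | rfl | (exfalso; simp [r0, r0.symm, r1, r1.symm, r2, r2.symm, r3, r3.symm, e0, e0.symm, e1, e1.symm] at hij)
  · intro i j
    fin_cases i <;> fin_cases j <;>
      simp [h0, s0, h1, s1, h2, s2, h3, s3, n0, m0, n1, m1, cycleGraph_adj] <;> decide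

theorem no_C5 {V : Type*} {G : SimpleGraph V} (hG : IsChordal G) {a b c d e : V}
    (h0 : G.Adj a b) (h1 : G.Adj b c) (h2 : G.Adj c d) (h3 : G.Adj d e) (h4 : G.Adj e a)
    (n0 : ¬ G.Adj a c) (n1 : ¬ G.Adj a d) (n2 : ¬ G.Adj b d) (n3 : ¬ G.Adj b e)
    (n4 : ¬ G.Adj c e) : False := by
  have r0 := h0.ne
  have s0 := h0.symm
  have r1 := h1.ne
  have s1 := h1.symm
  have r2 := h2.ne
  have s2 := h2.symm
  have r3 := h3.ne
  have s3 := h3.symm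
  have r4 := h4.ne
  have s4 := h4.symm
  have m0 : ¬ G.Adj c a := fun h => n0 h.symm
  have e0 : a ≠ c := by rintro rfl; contradiction
  have m1 : ¬ G.Adj d a := fun h => n1 h.symm
  have e1 : a ≠ d := by rintro rfl; contradiction
  have m2 : ¬ G.Adj d b := fun h => n2 h.symm
  have e2 : b ≠ d := by rintro rfl; contradiction
  have m3 : ¬ G.Adj e b := fun h => n3 h.symm
  have e3 : b ≠ e := by rintro rfl; contradiction
  have m4 : ¬ G.Adj e c := fun h => n4 h.symm
  have e4 : c ≠ e := by rintro rfl; contradiction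
  refine no_cycle hG 5 (by norm_num) ![a, b, c, d, e] ?_ ?_
  · intro i j hij
    fin_cases i <;> fin_cases j <;> first | rfl | (exfalso; simp [r0, r0.symm, r1, r1.symm, r2, r2.symm, r3, r3.symm, r4, r4.symm, e0, e0.symm, e1, e1.symm, e2, e2.symm, e3, e3.symm, e4, e4.symm] at hij)
  · intro i j
    fin_cases i <;> fin_cases j <;>
      simp [h0, s0, h1, s1, h2, s2, h3, s3, h4, s4, n0, m0, n1, m1, n2, m2, n3, m3, n4, m4, cycleGraph_adj] <;> decide

theorem no_C6 {V : Type*} {G : SimpleGraph V} (hG : IsChordal G) {a b c d e f : V}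
    (h0 : G.Adj a b) (h1 : G.Adj b c) (h2 : G.Adj c d) (h3 : G.Adj d e) (h4 : G.Adj e f) (h5 : G.Adj f a)
    (n0 : ¬ G.Adj a c) (n1 : ¬ G.Adj a d) (n2 : ¬ G.Adj a e) (n3 : ¬ G.Adj b d)
    (n4 : ¬ G.Adj b e) (n5 : ¬ G.Adj b f) (n6 : ¬ G.Adj c e) (n7 : ¬ G.Adj c f)
    (n8 : ¬ G.Adj d f) : False := by
  have r0 := h0.ne
  have s0 := h0.symm
  have r1 := h1.ne
  have s1 := h1.symm
  have r2 := h2.ne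
  have s2 := h2.symm
  have r3 := h3.ne
  have s3 := h3.symm
  have r4 := h4.ne
  have s4 := h4.symm
  have r5 := h5.ne
  have s5 := h5.symm
  have m0 : ¬ G.Adj c a := fun h => n0 h.symm
  have e0 : a ≠ c := by rintro rfl; contradiction
  have m1 : ¬ G.Adj d a := fun h => n1 h.symm
  have e1 : a ≠ d := by rintro rfl; contradiction
  have m2 : ¬ G.Adj e a := fun h => n2 h.symm
  have e2 : a ≠ e := by rintro rfl; contradiction
  have m3 : ¬ G.Adj d b := fun h => n3 h.symm
  have e3 : b ≠ d := by rintro rfl; contradiction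
  have m4 : ¬ G.Adj e b := fun h => n4 h.symm
  have e4 : b ≠ e := by rintro rfl; contradiction
  have m5 : ¬ G.Adj f b := fun h => n5 h.symm
  have e5 : b ≠ f := by rintro rfl; contradiction
  have m6 : ¬ G.Adj e c := fun h => n6 h.symm
  have e6 : c ≠ e := by rintro rfl; contradiction
  have m7 : ¬ G.Adj f c := fun h => n7 h.symm
  have e7 : c ≠ f := by rintro rfl; contradiction
  have m8 : ¬ G.Adj f d := fun h => n8 h.symm
  have e8 : d ≠ f := by rintro rfl; contradiction
  refine no_cycle hG 6 (by norm_num) ![a, b, c, d, e, f] ?_ ?_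
  · intro i j hij
    fin_cases i <;> fin_cases j <;> first | rfl | (exfalso; simp [r0, r0.symm, r1, r1.symm, r2, r2.symm, r3, r3.symm, r4, r4.symm, r5, r5.symm, e0, e0.symm, e1, e1.symm, e2, e2.symm, e3, e3.symm, e4, e4.symm, e5, e5.symm, e6, e6.symm, e7, e7.symm, e8, e8.symm] at hij)
  · intro i j
    fin_cases i <;> fin_cases j <;>
      simp [h0, s0, h1, s1, h2, s2, h3, s3, h4, s4, h5, s5, n0, m0, n1, m1, n2, m2, n3, m3, n4, m4, n5, m5, n6, m6, n7, m7, n8, m8, cycleGraph_adj] <;> decide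

/-- For every `w ∈ M₂(B)`, the set `f(w) = N₁(w) ∩ M₁(B)` is a clique of `G`. -/
theorem stmt5 {V : Type*} (G : SimpleGraph V) (hG : IsChordal G)
    (x : V) (Y : Set V) (hB : IsInducedStar G x Y)
    (w : V) (hw : w ∈ M2B G x Y) :
    G.IsClique (fSet G x Y {w}) := by
  obtain ⟨⟨y0, hy0⟩, hxY, hxy, hYY⟩ := hB
  have key : w ≠ x ∧ ¬ G.Adj w x ∧ w ∉ Y ∧ ∀ y ∈ Y, ¬ G.Adj w y := by
    rcases hw with ⟨⟨-, a, ⟨⟨-, x', hx', hax⟩, haY, haY', -⟩, hwa⟩, hwx, hwx', -⟩ |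
      ⟨⟨-, b, ⟨⟨-, y, hy, hby⟩, hbx, hbx', -⟩, hwb⟩, hwY, hwY', -⟩
    · simp only [Set.mem_singleton_iff] at hx' hwx
      subst hx'
      have hwx'' := hwx' _ rfl
      refine ⟨hwx, hwx'', fun h => hwx'' (hxy w h).symm, fun y hy hwy => ?_⟩
      exact no_C4 hG hax.symm hwa.symm hwy (hxy y hy).symm (fun h => hwx'' h.symm)
        (haY' y hy) (Ne.symm hwx) (fun h => haY (h ▸ hy))
    · have hbx'' := hbx' _ rfl
      simp only [Set.mem_singleton_iff] at hbx
      refine ⟨fun h => hwY' y hy (h ▸ hxy y hy), fun h => ?_, hwY, hwY'⟩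
      exact no_C4 hG hwb hby (hxy y hy).symm h.symm (hwY' y hy) hbx'' (fun h => hwY (h ▸ hy)) hbx
  obtain ⟨hwx, hnwx, hwY, hnwY⟩ := key
  have mixed : ∀ a ∈ M1X G x Y, ∀ b ∈ M1Y G x Y, G.Adj a w → G.Adj b w → G.Adj a b := by
    rintro a ⟨⟨-, x', hx', hax⟩, haY, haY', -⟩ b ⟨⟨-, y, hy, hby⟩, hbx, hbx', -⟩ haw hbw
    simp only [Set.mem_singleton_iff] at hx'
    subst hx'
    by_contra hab
    exact no_C5 hG hax.symm haw hbw.symm hby (hxy y hy).symm (fun h => hnwx h.symm)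
      (fun h => hbx' _ rfl h.symm) hab (haY' y hy) (hnwY y hy)
  rintro a ⟨⟨-, w', hw', haw⟩, ha⟩ b ⟨⟨-, w'', hw'', hbw⟩, hb⟩ hne
  simp only [Set.mem_singleton_iff] at hw' hw''
  subst hw' hw''
  rcases ha with ha | ha <;> rcases hb with hb | hb
  · obtain ⟨⟨-, x', hx', hax⟩, -⟩ := ha
    obtain ⟨⟨-, x'', hx'', hbx⟩, -⟩ := hb
    simp only [Set.mem_singleton_iff] at hx' hx''
    subst hx' hx''
    by_contra hab
    exact no_C4 hG hax.symm haw hbw.symm hbx (fun h => hnwx h.symm) hab (Ne.symm hwx) hne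
  · exact mixed a ha b hb haw hbw
  · exact (mixed b hb a ha hbw haw).symm
  · obtain ⟨⟨-, y, hy, hay⟩, -, hax, -⟩ := ha
    obtain ⟨⟨-, z, hz, hbz⟩, -, hbx, -⟩ := hb
    have hax := hax _ rfl
    have hbx := hbx _ rfl
    by_contra hab
    have c4 : ∀ u ∈ Y, G.Adj a u → G.Adj b u → False := fun u hu h1 h2 =>
      no_C4 hG h1.symm haw hbw.symm h2 (fun h => hnwY u hu h.symm) hab
        (fun h => hwY (h ▸ hu)) hne
    have haz : ¬ G.Adj a z := fun h => c4 z hz h hbz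
    have hby : ¬ G.Adj b y := fun h => c4 y hy hay h
    exact no_C6 hG (hxy y hy) hay.symm haw hbw.symm hbz (hxy z hz).symm
      (fun h => hax h.symm) (fun h => hnwx h.symm) (fun h => hbx h.symm)
      (fun h => hnwY y hy h.symm) (fun h => hby h.symm) (hYY y hy z hz) hab haz (hnwY z hz)
end
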